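/- The logic of ⊞ is not self-extensional: for distinct variables p and q, {p} ⊢_⊞ p⊞p and {p⊞p} ⊢_⊞ p, yet {(p⊞p)⊞q} ⊬_⊞ p⊞q; hence replacement of interderivable subformulas fails for ⊢_⊞. -/

import Mathlib

/-- Formulas built from countably many propositional variables with a single
binary connective `⊞` (platypus). -/
inductive Fm : Type where
  | var : ℕ → Fm
  | pl : Fm → Fm → Fm
deriving DecidableEq

namespace Fm

/-- The set of propositional variables occurring in a formula. -/
def vars : Fm → Set ℕ
  | var n => {n}
  | pl a b => vars a ∪ vars b

/-- A `𝔅_⊞`-valuation: a two-valued function such that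
`v (φ ⊞ ψ) ∈ {min (v φ) (v ψ), max (v φ) (v ψ)}`. -/
def IsVal (v : Fm → Bool) : Prop :=
  ∀ a b : Fm, v (a.pl b) = (v a && v b) ∨ v (a.pl b) = (v a || v b)

/-- The multiple-conclusion consequence `Γ ⊩_⊞ Δ`. -/
def Mc (Γ Δ : Set Fm) : Prop :=
  ∀ v : Fm → Bool, IsVal v → (∀ φ ∈ Γ, v φ = true) → ∃ ψ ∈ Δ, v ψ = true

/-- The single-conclusion consequence `Γ ⊢_⊞ φ`. -/
def Sc (Γ : Set Fm) (φ : Fm) : Prop := Mc Γ {φ}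

end Fm

/-- Counter-valuation. -/
def cv (p : ℕ) : Fm → Bool
  | Fm.var n => decide (n = p)
  | Fm.pl (Fm.var n) b => decide (n = p) && cv p b
  | Fm.pl (Fm.pl a c) b => cv p (Fm.pl a c) || cv p b

theorem cv_isVal (p : ℕ) : Fm.IsVal (cv p) := by
  intro a b
  cases a with
  | var n => left; simp [cv]
  | pl a c => right; rw [cv]

open Fm in
/-- `⊢_⊞` is not self-extensional: for distinct variables `p, q`,
`p` and `p ⊞ p` are interderivable, yet `(p ⊞ p) ⊞ q ⊬_⊞ p ⊞ q`. -/
theorem platypus_not_self_extensional (p q : ℕ) (hpq : p ≠ q) :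
    Sc {Fm.var p} ((Fm.var p).pl (Fm.var p)) ∧
    Sc {(Fm.var p).pl (Fm.var p)} (Fm.var p) ∧
    ¬ Sc {((Fm.var p).pl (Fm.var p)).pl (Fm.var q)} ((Fm.var p).pl (Fm.var q)) := by
  refine ⟨?_, ?_, ?_⟩
  · intro v hv h
    have h1 := h _ rfl
    refine ⟨_, rfl, ?_⟩
    rcases hv (Fm.var p) (Fm.var p) with h2 | h2 <;> simp [h2, h1]
  · intro v hv h
    have h1 := h _ rfl
    refine ⟨_, rfl, ?_⟩
    rcases hv (Fm.var p) (Fm.var p) with h2 | h2 <;> simpa [h2] using h1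
  · intro h
    obtain ⟨ψ, hψ, h1⟩ := h (cv p) (cv_isVal p) (by
      intro φ hφ
      rw [Set.mem_singleton_iff] at hφ
      subst hφ
      simp [cv])
    rw [Set.mem_singleton_iff] at hψ
    subst hψ
    simp [cv] at h1
    exact hpq h1.symm
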